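/- Assume 2r < σ² and 2rK > L(σ² + 2r), and set b = 2rK/(2r + σ²) (so that b > L). Then the perpetual value function is given explicitly by V(x) = G(x) for x ∈ (0, b) and V(x) = (K − b)·b^{2r/σ²}·x^{−2r/σ²} for x ∈ [b, ∞); moreover the stopping time τ_b = inf{t ≥ 0 : X^x_t ≤ b} is optimal, i.e. V(x) = E[e^{−r·τ_b} G(X^x_{τ_b})] for every x > 0. -/

import Mathlib

open MeasureTheory ProbabilityTheory Real Set Filter

noncomputable section

/-- Geometric Brownian motion with parameters `r`, `σ`, started at `x`,
driven by the process `W`: `X^x_t = x · exp((r - σ²/2)t + σ W_t)`. -/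
def GBM {Ω : Type} (r σ x : ℝ) (W : ℝ → Ω → ℝ) (t : ℝ) (ω : Ω) : ℝ :=
  x * Real.exp ((r - σ ^ 2 / 2) * t + σ * W t ω)

/-- `W` is a standard Brownian motion with respect to the filtration `F` under the
probability measure `P`: it starts at `0`, has continuous paths, is adapted to `F`,
has Gaussian increments `W t - W s ∼ N(0, t - s)`, and its increments after time `s`
are independent of `F s`. -/
structure IsStdBM {Ω : Type} [mΩ : MeasurableSpace Ω] (P : Measure Ω)
    (F : Filtration ℝ mΩ) (W : ℝ → Ω → ℝ) : Prop where
  init : ∀ ω, W 0 ω = 0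
  cont : ∀ ω, Continuous fun t => W t ω
  adapted : ∀ t : ℝ, Measurable[F t] (W t)
  incr_law : ∀ s t : ℝ, 0 ≤ s → s ≤ t →
      Measure.map (fun ω => W t ω - W s ω) P = gaussianReal 0 (Real.toNNReal (t - s))
  incr_indep : ∀ s t : ℝ, 0 ≤ s → s ≤ t →
      Indep (MeasurableSpace.comap (fun ω => W t ω - W s ω) Real.measurableSpace) (F s) P

/-- An `ℝ≥0∞`-valued random time `τ` is a stopping time for the real-indexed
filtration `F` if `{τ ≤ t} ∈ F t` for every `t ≥ 0`. -/
def IsStoppingTimeE {Ω : Type} [mΩ : MeasurableSpace Ω] (F : Filtration ℝ mΩ)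
    (τ : Ω → ENNReal) : Prop :=
  ∀ t : ℝ, 0 ≤ t → MeasurableSet[F t] {ω | τ ω ≤ ENNReal.ofReal t}

/-- The perpetual Azéma supermartingale function `Z(x) = min{(L/x)^α, 1}`,
with `α = 2r/σ² - 1`. -/
def Zp (r σ L x : ℝ) : ℝ := min ((L / x) ^ (2 * r / σ ^ 2 - 1)) 1

/-- The perpetual gain function `G(x) = (K - x)⁺ · Z(x)`. -/
def gainP (r σ L K x : ℝ) : ℝ := max (K - x) 0 * Zp r σ L x

/-- The perpetual value function `V(x) = sup_τ E[e^{-rτ} G(X^x_τ)]`, the supremum over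
all stopping times, with the convention that the payoff vanishes on `{τ = ∞}`. -/
def valueP {Ω : Type} [mΩ : MeasurableSpace Ω] (P : Measure Ω) (F : Filtration ℝ mΩ)
    (W : ℝ → Ω → ℝ) (r σ L K x : ℝ) : ℝ :=
  ⨆ τ : {τ : Ω → ENNReal // IsStoppingTimeE F τ},
    ∫ ω in {ω | τ.1 ω ≠ ⊤},
      Real.exp (-r * (τ.1 ω).toReal) * gainP r σ L K (GBM r σ x W ((τ.1 ω).toReal) ω) ∂P

/-- The first passage time `τ_b = inf{t ≥ 0 : X^x_t ≤ b}` of the geometric Brownian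
motion `X^x` at or below the level `b`. -/
def hitTime {Ω : Type} (r σ x b : ℝ) (W : ℝ → Ω → ℝ) (ω : Ω) : ℝ :=
  sInf {t : ℝ | 0 ≤ t ∧ GBM r σ x W t ω ≤ b}

set_option linter.unusedSectionVars false

section helpers

/-- The exponential martingale. -/
def expM {Ω : Type} (W : ℝ → Ω → ℝ) (θ t : ℝ) (ω : Ω) : ℝ :=
  Real.exp (θ * W t ω - θ ^ 2 * t / 2)

variable {Ω : Type} [mΩ : MeasurableSpace Ω] {P : Measure Ω} [IsProbabilityMeasure P]
    {F : Filtration ℝ mΩ} {W : ℝ → Ω → ℝ}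

lemma expM_pos (θ t : ℝ) (ω : Ω) : 0 < expM W θ t ω := Real.exp_pos _

lemma W_meas (hW : IsStdBM P F W) (t : ℝ) : Measurable (W t) :=
  (hW.adapted t).mono (F.le t) le_rfl

lemma expM_measF (hW : IsStdBM P F W) (θ t : ℝ) : Measurable[F t] (expM W θ t) := by
  have h := hW.adapted t
  unfold expM
  exact Real.measurable_exp.comp ((h.const_mul θ).sub_const _)

lemma expM_meas (hW : IsStdBM P F W) (θ t : ℝ) : Measurable (expM W θ t) :=
  (expM_measF hW θ t).mono (F.le t) le_rfl

lemma incr_int (hW : IsStdBM P F W) (θ : ℝ) {s t : ℝ} (hs : 0 ≤ s) (hst : s ≤ t) :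
    Integrable (fun ω => Real.exp (θ * (W t ω - W s ω) - θ ^ 2 * (t - s) / 2)) P ∧
    ∫ ω, Real.exp (θ * (W t ω - W s ω) - θ ^ 2 * (t - s) / 2) ∂P = 1 := by
  have hlaw := hW.incr_law s t hs hst
  have hm : Measurable (fun ω => W t ω - W s ω) := (W_meas hW t).sub (W_meas hW s)
  have hI : Integrable (fun ω => Real.exp (θ * (W t ω - W s ω))) P := by
    have := integrable_exp_mul_gaussianReal (μ := 0) (v := Real.toNNReal (t - s)) θ
    rw [← hlaw, integrable_map_measure (by fun_prop) hm.aemeasurable] at this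
    exact this
  have hmgf : ∫ ω, Real.exp (θ * (W t ω - W s ω)) ∂P = Real.exp (θ ^ 2 * (t - s) / 2) := by
    have := mgf_gaussianReal hlaw θ
    rw [mgf] at this
    rw [this, Real.coe_toNNReal _ (sub_nonneg.2 hst)]
    congr 1; ring
  have e : (fun ω => Real.exp (θ * (W t ω - W s ω) - θ ^ 2 * (t - s) / 2)) =
      fun ω => Real.exp (θ * (W t ω - W s ω)) * Real.exp (-(θ ^ 2 * (t - s) / 2)) := by
    funext ω; rw [← Real.exp_add]; ring_nf
  rw [e]
  refine ⟨hI.mul_const _, ?_⟩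
  rw [integral_mul_const, hmgf, ← Real.exp_add]; simp

lemma expM_int (hW : IsStdBM P F W) (θ : ℝ) {t : ℝ} (ht : 0 ≤ t) :
    Integrable (expM W θ t) P ∧ ∫ ω, expM W θ t ω ∂P = 1 := by
  have := incr_int hW θ le_rfl ht
  simp only [hW.1, sub_zero] at this
  exact this

lemma expM_incr (hW : IsStdBM P F W) (θ : ℝ) {s t : ℝ} (hs : 0 ≤ s) (hst : s ≤ t)
    {A : Set Ω} (hA : MeasurableSet[F s] A) :
    ∫ ω, A.indicator (fun ω => expM W θ t ω - expM W θ s ω) ω ∂P = 0 := by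
  have hA' : MeasurableSet A := F.le s _ hA
  have hIs := (expM_int hW θ hs).1
  have hIt := (expM_int hW θ (hs.trans hst)).1
  have hY : Measurable[F s] (A.indicator (expM W θ s)) :=
    (expM_measF hW θ s).indicator hA
  let D : Ω → ℝ := fun ω => W t ω - W s ω
  have hD : Measurable[MeasurableSpace.comap D Real.measurableSpace] D :=
    comap_measurable D
  have hE : Measurable[MeasurableSpace.comap D Real.measurableSpace]
      (fun ω => Real.exp (θ * D ω - θ ^ 2 * (t - s) / 2)) :=
    Real.measurable_exp.comp ((hD.const_mul θ).sub_const _)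
  have hind : IndepFun (fun ω => Real.exp (θ * D ω - θ ^ 2 * (t - s) / 2))
      (A.indicator (expM W θ s)) P :=
    indep_of_indep_of_le_right (indep_of_indep_of_le_left (hW.incr_indep s t hs hst)
      hE.comap_le) hY.comap_le
  have h1 := incr_int hW θ hs hst
  have hprod := hind.integral_fun_mul_eq_mul_integral h1.1.aestronglyMeasurable
    (hIs.indicator hA').aestronglyMeasurable
  have h2 : ∀ ω, A.indicator (fun ω => expM W θ t ω - expM W θ s ω) ω =
      Real.exp (θ * D ω - θ ^ 2 * (t - s) / 2) * A.indicator (expM W θ s) ω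
        - A.indicator (expM W θ s) ω := by
    intro ω
    by_cases hω : ω ∈ A
    · simp only [Set.indicator_of_mem hω, expM, D, ← Real.exp_add]
      ring_nf
    · simp [Set.indicator_of_notMem hω]
  have hIp : Integrable (fun ω => Real.exp (θ * D ω - θ ^ 2 * (t - s) / 2) *
      A.indicator (expM W θ s) ω) P := hind.integrable_mul h1.1 (hIs.indicator hA')
  simp_rw [h2]
  rw [integral_sub hIp (hIs.indicator hA'), hprod]
  have : ∫ ω, Real.exp (θ * D ω - θ ^ 2 * (t - s) / 2) ∂P = 1 := h1.2
  rw [this]; ring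

/-- Grid approximation of a random time. -/
def gridT {Ω : Type} (τ : Ω → ENNReal) (δ : ℝ) : ℕ → Ω → ℝ
  | 0, _ => 0
  | (k + 1), ω => open Classical in
      if ENNReal.ofReal (k * δ) < τ ω then (k + 1 : ℝ) * δ else gridT τ δ k ω

lemma gridT_eq {τ : Ω → ENNReal} {δ : ℝ} (hδ : 0 ≤ δ) (k : ℕ) (ω : Ω)
    (h : ENNReal.ofReal (k * δ) < τ ω) : gridT τ δ k ω = k * δ := by
  cases k with
  | zero => simp [gridT]
  | succ k =>
    have : ENNReal.ofReal (k * δ) < τ ω := by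
      refine lt_of_le_of_lt (ENNReal.ofReal_le_ofReal ?_) h
      push_cast; nlinarith
    rw [gridT, if_pos this]; push_cast; rfl

lemma gridT_bd {τ : Ω → ENNReal} {δ : ℝ} (hδ : 0 ≤ δ) (k : ℕ) (ω : Ω) :
    (min (τ ω) (ENNReal.ofReal (k * δ))).toReal ≤ gridT τ δ k ω ∧
    gridT τ δ k ω ≤ (min (τ ω) (ENNReal.ofReal (k * δ))).toReal + δ ∧
    gridT τ δ k ω ≤ k * δ := by
  induction k with
  | zero => simp [gridT, hδ]
  | succ k ih =>
    have hk : (0:ℝ) ≤ k * δ := by positivity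
    have hk1 : (0:ℝ) ≤ (k + 1 : ℝ) * δ := by positivity
    have hkk : (k:ℝ) * δ ≤ (k+1 : ℝ) * δ := by nlinarith
    by_cases h : ENNReal.ofReal (k * δ) < τ ω
    · have e : gridT τ δ (k+1) ω = (k + 1 : ℝ) * δ := if_pos h
      rw [e]; push_cast
      refine ⟨?_, ?_, le_rfl⟩
      · refine ENNReal.toReal_le_of_le_ofReal hk1 (min_le_right _ _)
      · have : (k:ℝ) * δ ≤ (min (τ ω) (ENNReal.ofReal ((k + 1 : ℝ) * δ))).toReal := by
          rw [← ENNReal.ofReal_le_iff_le_toReal (by simp)]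
          exact le_min h.le (ENNReal.ofReal_le_ofReal hkk)
        linarith
    · have e : gridT τ δ (k+1) ω = gridT τ δ k ω := if_neg h
      have h' := not_lt.1 h
      have h'' := h'.trans (ENNReal.ofReal_le_ofReal hkk)
      rw [min_eq_left h'] at ih
      rw [e]; push_cast
      rw [min_eq_left h'']
      exact ⟨ih.1, ih.2.1, ih.2.2.trans hkk⟩

lemma grid_mart (hW : IsStdBM P F W) {τ : Ω → ENNReal} (hτ : IsStoppingTimeE F τ)
    (θ : ℝ) {δ : ℝ} (hδ : 0 ≤ δ) (k : ℕ) :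
    Measurable (fun ω => expM W θ (gridT τ δ k ω) ω) ∧
    Integrable (fun ω => expM W θ (gridT τ δ k ω) ω) P ∧
    ∫ ω, expM W θ (gridT τ δ k ω) ω ∂P = 1 := by
  induction k with
  | zero =>
    simp only [gridT]
    exact ⟨expM_meas hW θ 0, expM_int hW θ le_rfl⟩
  | succ k ih =>
    have hk : (0:ℝ) ≤ k * δ := by positivity
    have hk1 : (0:ℝ) ≤ (k + 1 : ℝ) * δ := by positivity
    have hkk : (k:ℝ) * δ ≤ (k+1 : ℝ) * δ := by nlinarith
    let A : Set Ω := {ω | ENNReal.ofReal (k * δ) < τ ω}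
    have hA : MeasurableSet[F (k * δ)] A := by
      have := (hτ _ hk).compl
      convert this using 1
      ext ω; simp [A]
    have hA' : MeasurableSet A := F.le _ _ hA
    have e : (fun ω => expM W θ (gridT τ δ (k+1) ω) ω) = fun ω =>
        expM W θ (gridT τ δ k ω) ω +
        A.indicator (fun ω => expM W θ ((k+1:ℝ) * δ) ω - expM W θ (k * δ) ω) ω := by
      funext ω
      by_cases h : ENNReal.ofReal (k * δ) < τ ω
      · have hm : ω ∈ A := h
        rw [Set.indicator_of_mem hm, gridT_eq hδ k ω h, gridT, if_pos h]
        ring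
      · have hm : ω ∉ A := h
        rw [Set.indicator_of_notMem hm, gridT, if_neg h, add_zero]
    have hI : Integrable (A.indicator
      (fun ω => expM W θ ((k+1:ℝ) * δ) ω - expM W θ (k * δ) ω)) P :=
      ((expM_int hW θ hk1).1.sub (expM_int hW θ hk).1).indicator hA'
    rw [e]
    refine ⟨ih.1.add (((expM_meas hW θ _).sub (expM_meas hW θ _)).indicator hA'),
      ih.2.1.add hI, ?_⟩
    rw [integral_add ih.2.1 hI, ih.2.2, expM_incr hW θ hk hkk hA, add_zero]

lemma expM_cont (hW : IsStdBM P F W) (θ : ℝ) (ω : Ω) :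
    Continuous (fun t => expM W θ t ω) := by
  have := hW.cont ω
  unfold expM
  fun_prop

lemma ost_bdd (hW : IsStdBM P F W) {τ : Ω → ENNReal} (hτ : IsStoppingTimeE F τ)
    (θ : ℝ) {T : ℝ} (hT : 0 ≤ T) :
    Measurable (fun ω => expM W θ (min (τ ω) (ENNReal.ofReal T)).toReal ω) ∧
    Integrable (fun ω => expM W θ (min (τ ω) (ENNReal.ofReal T)).toReal ω) P ∧
    ∫ ω, expM W θ (min (τ ω) (ENNReal.ofReal T)).toReal ω ∂P = 1 := by
  let δ : ℕ → ℝ := fun n => T / (n + 1 : ℝ)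
  have hδ : ∀ n, 0 ≤ δ n := fun n => by positivity
  have hδT : ∀ n, ((n + 1 : ℕ) : ℝ) * δ n = T := fun n => by
    simp only [δ]; push_cast; field_simp
  have hδ0 : Tendsto δ atTop (nhds 0) := by
    have := (tendsto_one_div_add_atTop_nhds_zero_nat (𝕜 := ℝ)).const_mul T
    simpa [δ, div_eq_mul_inv] using this
  let ρ : ℕ → Ω → ℝ := fun n => gridT τ (δ n) (n + 1)
  let ρ' : Ω → ℝ := fun ω => (min (τ ω) (ENNReal.ofReal T)).toReal
  have hρ : ∀ ω, Tendsto (fun n => ρ n ω) atTop (nhds (ρ' ω)) := by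
    intro ω
    have hb := fun n => gridT_bd (τ := τ) (hδ n) (n + 1) ω
    simp only [hδT] at hb
    refine tendsto_of_tendsto_of_tendsto_of_le_of_le tendsto_const_nhds
      (h := fun n => ρ' ω + δ n) ?_ (fun n => (hb n).1) (fun n => (hb n).2.1)
    simpa using hδ0.const_add (ρ' ω)
  have hg := fun θ n => grid_mart hW hτ θ (hδ n) (n + 1)
  have hlim : ∀ ω, Tendsto (fun n => expM W θ (ρ n ω) ω) atTop
      (nhds (expM W θ (ρ' ω) ω)) := fun ω =>
    ((expM_cont hW θ ω).tendsto _).comp (hρ ω)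
  have hmeas : Measurable (fun ω => expM W θ (ρ' ω) ω) :=
    measurable_of_tendsto_metrizable (fun n => (hg θ n).1) (tendsto_pi_nhds.2 hlim)
  have hle : ∫⁻ ω, ENNReal.ofReal (expM W θ (ρ' ω) ω) ∂P ≤ 1 := by
    have hf := lintegral_liminf_le (μ := P) (u := atTop)
      (f := fun n ω => ENNReal.ofReal (expM W θ (ρ n ω) ω))
      (fun n => (hg θ n).1.ennreal_ofReal)
    have e1 : ∀ ω, liminf (fun n => ENNReal.ofReal (expM W θ (ρ n ω) ω)) atTop =
        ENNReal.ofReal (expM W θ (ρ' ω) ω) := fun ω =>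
      ((ENNReal.continuous_ofReal.tendsto _).comp (hlim ω)).liminf_eq
    have e2 : ∀ n, ∫⁻ ω, ENNReal.ofReal (expM W θ (ρ n ω) ω) ∂P = 1 := fun n => by
      rw [← ofReal_integral_eq_lintegral_ofReal (hg θ n).2.1
        (ae_of_all _ fun ω => (expM_pos _ _ _).le)]
      rw [(hg θ n).2.2]; simp
    simp only [e1, e2, liminf_const] at hf
    exact hf
  have hint : Integrable (fun ω => expM W θ (ρ' ω) ω) P := by
    refine ⟨hmeas.aestronglyMeasurable, ?_⟩
    rw [hasFiniteIntegral_iff_ofReal (ae_of_all _ fun ω => (expM_pos _ _ _).le)]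
    exact hle.trans_lt (by simp)
  have hle' : ∫ ω, expM W θ (ρ' ω) ω ∂P ≤ 1 := by
    rw [integral_eq_lintegral_of_nonneg_ae (ae_of_all _ fun ω => (expM_pos _ _ _).le)
      hmeas.aestronglyMeasurable]
    exact ENNReal.toReal_le_of_le_ofReal zero_le_one (by simpa using hle)
  refine ⟨hmeas, hint, le_antisymm hle' ?_⟩
  let D := Real.exp (θ ^ 2 * T)
  have hDpos : 0 < D := Real.exp_pos _
  have key : ∀ C : ℝ, 0 < C → 1 ≤ ∫ ω, expM W θ (ρ' ω) ω ∂P + D / C := by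
    intro C hC
    have hmn : ∀ n, Measurable (fun ω => min (expM W θ (ρ n ω) ω) C) := fun n =>
      (hg θ n).1.min measurable_const
    have hbn : ∀ n ω, ‖min (expM W θ (ρ n ω) ω) C‖ ≤ C := fun n ω => by
      rw [Real.norm_of_nonneg (le_min (expM_pos _ _ _).le hC.le)]
      exact min_le_right _ _
    have hmin : ∀ n, Integrable (fun ω => min (expM W θ (ρ n ω) ω) C) P := fun n =>
      Integrable.of_bound (hmn n).aestronglyMeasurable C (ae_of_all _ (hbn n))
    have h1 : ∀ n, 1 ≤ ∫ ω, min (expM W θ (ρ n ω) ω) C ∂P + D / C := by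
      intro n
      have hpt : ∀ ω, expM W θ (ρ n ω) ω ≤ min (expM W θ (ρ n ω) ω) C +
          (D / C) * expM W (2 * θ) (ρ n ω) ω := by
        intro ω
        have hr : ρ n ω ≤ T := by
          have := (gridT_bd (τ := τ) (hδ n) (n + 1) ω).2.2
          rwa [hδT] at this
        have hsq : expM W θ (ρ n ω) ω * expM W θ (ρ n ω) ω
            ≤ D * expM W (2 * θ) (ρ n ω) ω := by
          simp only [expM, D, ← Real.exp_add]
          apply Real.exp_le_exp.2
          nlinarith [mul_le_mul_of_nonneg_left hr (sq_nonneg θ)]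
        have hp := expM_pos (W := W) θ (ρ n ω) ω
        rcases le_total (expM W θ (ρ n ω) ω) C with h | h
        · rw [min_eq_left h]
          have := expM_pos (W := W) (2 * θ) (ρ n ω) ω
          have : 0 ≤ (D / C) * expM W (2 * θ) (ρ n ω) ω := by positivity
          linarith
        · have : expM W θ (ρ n ω) ω ≤ (D / C) * expM W (2 * θ) (ρ n ω) ω := by
            rw [div_mul_eq_mul_div, le_div_iff₀ hC]
            nlinarith
          have : 0 ≤ min (expM W θ (ρ n ω) ω) C := le_min hp.le hC.le
          linarith
      have := integral_mono (hg θ n).2.1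
        ((hmin n).add ((hg (2 * θ) n).2.1.const_mul (D / C))) hpt
      rw [(hg θ n).2.2] at this
      refine this.trans_eq ?_
      simp only [Pi.add_apply]
      rw [integral_add (hmin n) ((hg (2 * θ) n).2.1.const_mul (D / C)), integral_const_mul,
        (hg (2 * θ) n).2.2, mul_one]
    have h2 : Tendsto (fun n => ∫ ω, min (expM W θ (ρ n ω) ω) C ∂P) atTop
        (nhds (∫ ω, min (expM W θ (ρ' ω) ω) C ∂P)) :=
      tendsto_integral_of_dominated_convergence (fun _ => C)
        (fun n => (hmn n).aestronglyMeasurable) (integrable_const _)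
        (fun n => ae_of_all _ (hbn n))
        (ae_of_all _ fun ω => (hlim ω).min tendsto_const_nhds)
    have h3 := ge_of_tendsto' (h2.add_const (D / C)) h1
    refine h3.trans (add_le_add ?_ le_rfl)
    refine integral_mono_of_nonneg
      (ae_of_all _ fun ω => le_min (expM_pos _ _ _).le hC.le) hint
      (ae_of_all _ fun ω => min_le_left _ _)
  have hCt : Tendsto (fun C : ℝ => ∫ ω, expM W θ (ρ' ω) ω ∂P + D / C) atTop
      (nhds (∫ ω, expM W θ (ρ' ω) ω ∂P + 0)) :=
    (tendsto_const_nhds.div_atTop tendsto_id).const_add _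
  rw [add_zero] at hCt
  exact ge_of_tendsto hCt (eventually_atTop.2 ⟨1, fun C hC => key C (by linarith)⟩)

lemma meas_ne_top {τ : Ω → ENNReal} (hτ : IsStoppingTimeE F τ) :
    MeasurableSet {ω | τ ω ≠ ⊤} := by
  have : {ω | τ ω ≠ ⊤} = ⋃ n : ℕ, {ω | τ ω ≤ ENNReal.ofReal n} := by
    ext ω
    simp only [Set.mem_ofPred_eq, Set.mem_iUnion]
    constructor
    · intro h
      obtain ⟨n, hn⟩ := ENNReal.exists_nat_gt h
      exact ⟨n, by simpa using hn.le⟩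
    · rintro ⟨n, hn⟩ h
      rw [h] at hn; simp at hn
  rw [this]
  exact MeasurableSet.iUnion fun n => F.le _ _ (hτ n (Nat.cast_nonneg n))

lemma ev_min {τ : ENNReal} (h : τ ≠ ⊤) :
    ∀ᶠ n : ℕ in atTop, (min τ (ENNReal.ofReal n)).toReal = τ.toReal := by
  obtain ⟨n, hn⟩ := ENNReal.exists_nat_gt h
  filter_upwards [eventually_ge_atTop n] with m hm
  rw [min_eq_left]
  rw [ENNReal.ofReal_natCast]
  exact hn.le.trans (by exact_mod_cast hm)

lemma ost_gen (hW : IsStdBM P F W) {τ : Ω → ENNReal} (hτ : IsStoppingTimeE F τ)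
    (θ : ℝ) :
    IntegrableOn (fun ω => expM W θ (τ ω).toReal ω) {ω | τ ω ≠ ⊤} P ∧
    ∫ ω in {ω | τ ω ≠ ⊤}, expM W θ (τ ω).toReal ω ∂P ≤ 1 := by
  have hg := fun n : ℕ => ost_bdd hW hτ θ (Nat.cast_nonneg n : (0:ℝ) ≤ n)
  have hS := meas_ne_top hτ
  set S := {ω | τ ω ≠ ⊤} with hSdef
  have hlim : ∀ ω, Tendsto (fun n : ℕ => S.indicator
      (fun ω => expM W θ (min (τ ω) (ENNReal.ofReal n)).toReal ω) ω) atTop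
      (nhds (S.indicator (fun ω => expM W θ (τ ω).toReal ω) ω)) := by
    intro ω
    by_cases h : ω ∈ S
    · simp only [Set.indicator_of_mem h]
      refine tendsto_const_nhds.congr' ?_
      filter_upwards [ev_min h] with n hn
      rw [hn]
    · simp only [Set.indicator_of_notMem h]
      exact tendsto_const_nhds
  have hm : Measurable (S.indicator (fun ω => expM W θ (τ ω).toReal ω)) :=
    measurable_of_tendsto_metrizable (fun n => (hg n).1.indicator hS)
      (tendsto_pi_nhds.2 hlim)
  have hnn : ∀ ω, 0 ≤ S.indicator (fun ω => expM W θ (τ ω).toReal ω) ω := fun ω =>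
    Set.indicator_nonneg (fun ω _ => (expM_pos _ _ _).le) ω
  have hle : ∫⁻ ω, ENNReal.ofReal (S.indicator (fun ω => expM W θ (τ ω).toReal ω) ω) ∂P
      ≤ 1 := by
    have hf := lintegral_liminf_le (μ := P) (u := atTop)
      (f := fun (n : ℕ) ω => ENNReal.ofReal (S.indicator
      (fun ω => expM W θ (min (τ ω) (ENNReal.ofReal n)).toReal ω) ω))
      (fun n => ((hg n).1.indicator hS).ennreal_ofReal)
    have e1 : ∀ ω, liminf (fun n : ℕ => ENNReal.ofReal (S.indicator
      (fun ω => expM W θ (min (τ ω) (ENNReal.ofReal n)).toReal ω) ω)) atTop =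
        ENNReal.ofReal (S.indicator (fun ω => expM W θ (τ ω).toReal ω) ω) := fun ω =>
      ((ENNReal.continuous_ofReal.tendsto _).comp (hlim ω)).liminf_eq
    have e2 : ∀ n : ℕ, ∫⁻ ω, ENNReal.ofReal (S.indicator
      (fun ω => expM W θ (min (τ ω) (ENNReal.ofReal n)).toReal ω) ω) ∂P ≤ 1 := fun n => by
      calc _ ≤ ∫⁻ ω, ENNReal.ofReal
            (expM W θ (min (τ ω) (ENNReal.ofReal n)).toReal ω) ∂P :=
            lintegral_mono fun ω => ENNReal.ofReal_le_ofReal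
              (Set.indicator_le_self' (fun _ _ => (expM_pos _ _ _).le) ω)
        _ = 1 := by
          rw [← ofReal_integral_eq_lintegral_ofReal (hg n).2.1
            (ae_of_all _ fun ω => (expM_pos _ _ _).le)]
          rw [(hg n).2.2]; simp
    simp only [e1] at hf
    refine hf.trans ?_
    calc _ ≤ liminf (fun _ : ℕ => (1 : ENNReal)) atTop :=
          liminf_le_liminf (Eventually.of_forall e2)
      _ = 1 := liminf_const _
  have hint : Integrable (S.indicator (fun ω => expM W θ (τ ω).toReal ω)) P := by
    refine ⟨hm.aestronglyMeasurable, ?_⟩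
    rw [hasFiniteIntegral_iff_ofReal (ae_of_all _ hnn)]
    exact hle.trans_lt (by simp)
  refine ⟨(integrable_indicator_iff hS).1 hint, ?_⟩
  rw [← integral_indicator hS, integral_eq_lintegral_of_nonneg_ae (ae_of_all _ hnn)
      hm.aestronglyMeasurable]
  exact ENNReal.toReal_le_of_le_ofReal zero_le_one (by simpa using hle)

lemma GBM_pos (r σ : ℝ) {x : ℝ} (hx : 0 < x) (t : ℝ) (ω : Ω) : 0 < GBM r σ x W t ω :=
  mul_pos hx (Real.exp_pos _)

lemma GBM_div (r σ x z : ℝ) (t : ℝ) (ω : Ω) :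
    GBM r σ x W t ω / z = GBM r σ (x / z) W t ω := by
  unfold GBM; ring

lemma disc1 (r σ x t : ℝ) (ω : Ω) :
    Real.exp (-r * t) * GBM r σ x W t ω = x * expM W σ t ω := by
  unfold GBM expM
  rw [mul_left_comm, ← Real.exp_add]
  ring_nf

lemma disc2 (r : ℝ) {σ x : ℝ} (hσ : 0 < σ) (hx : 0 < x) (t : ℝ) (ω : Ω) :
    Real.exp (-r * t) * (GBM r σ x W t ω) ^ (-(2 * r / σ ^ 2)) =
      x ^ (-(2 * r / σ ^ 2)) * expM W (-(2 * r / σ ^ 2) * σ) t ω := by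
  unfold GBM expM
  rw [Real.mul_rpow hx.le (Real.exp_pos _).le, mul_left_comm, ← Real.exp_mul, ← Real.exp_add]
  congr 2
  field_simp
  ring

lemma gain_nonneg {r σ L K y : ℝ} (hL : 0 < L) (hy : 0 < y) : 0 ≤ gainP r σ L K y := by
  unfold gainP Zp
  have : 0 < L / y := div_pos hL hy
  exact mul_nonneg (le_max_right _ _) (le_min (Real.rpow_nonneg this.le _) zero_le_one)

lemma gain_le1 {r σ L K y : ℝ} : gainP r σ L K y ≤ max (K - y) 0 := by
  unfold gainP Zp
  exact mul_le_of_le_one_right (le_max_right _ _) (min_le_right _ _)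

lemma gain_le2 {r σ L K y : ℝ} (hL : 0 < L) (hy : 0 < y) :
    gainP r σ L K y ≤ max (K - y) 0 * (y / L) ^ (1 - 2 * r / σ ^ 2) := by
  unfold gainP Zp
  refine mul_le_mul_of_nonneg_left ((min_le_left _ _).trans_eq ?_) (le_max_right _ _)
  rw [← inv_div, Real.inv_rpow (by positivity), ← Real.rpow_neg (by positivity)]
  congr 1; ring

lemma gain_eq1 {r σ L K y : ℝ} (hL : 0 < L) (hLy : L ≤ y) (hyK : y ≤ K)
    (hβ : 2 * r / σ ^ 2 < 1) : gainP r σ L K y = K - y := by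
  unfold gainP Zp
  rw [max_eq_left (by linarith), min_eq_right, mul_one]
  have hy : 0 < y := hL.trans_le hLy
  apply Real.one_le_rpow_of_pos_of_le_one_of_nonpos (by positivity)
  · exact (div_le_one hy).2 hLy
  · linarith

lemma gain_eq2 {r σ L K y : ℝ} (hL : 0 < L) (hy : 0 < y) (hLy : y ≤ L) (hyK : y ≤ K)
    (hβ : 2 * r / σ ^ 2 < 1) :
    gainP r σ L K y = (K - y) * (y / L) ^ (1 - 2 * r / σ ^ 2) := by
  unfold gainP Zp
  rw [max_eq_left (by linarith), min_eq_left]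
  · rw [← inv_div, Real.inv_rpow (by positivity), ← Real.rpow_neg (by positivity)]
    congr 2; ring
  · apply Real.rpow_le_one_of_one_le_of_nonpos
    · exact (one_le_div hy).2 hLy
    · linarith

lemma upper (hW : IsStdBM P F W) {r σ L K x z A B : ℝ} (hσ : 0 < σ) (hL : 0 < L)
    (hx : 0 < x) (hz : 0 < z) (hA : 0 ≤ A) (hB : 0 ≤ B)
    (hdom : ∀ y, 0 < y → gainP r σ L K y ≤ A * (y / z) ^ (-(2 * r / σ ^ 2)) + B * (y / z))
    {τ : Ω → ENNReal} (hτ : IsStoppingTimeE F τ) :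
    ∫ ω in {ω | τ ω ≠ ⊤}, Real.exp (-r * (τ ω).toReal) *
      gainP r σ L K (GBM r σ x W ((τ ω).toReal) ω) ∂P ≤
      A * (x / z) ^ (-(2 * r / σ ^ 2)) + B * (x / z) := by
  have hxz : 0 < x / z := div_pos hx hz
  obtain ⟨i1, l1⟩ := ost_gen hW hτ σ
  obtain ⟨i2, l2⟩ := ost_gen hW hτ (-(2 * r / σ ^ 2) * σ)
  set c := (x / z) ^ (-(2 * r / σ ^ 2)) with hc
  have hcpos : 0 < c := Real.rpow_pos_of_pos hxz _
  have hpt : ∀ ω, Real.exp (-r * (τ ω).toReal) *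
      gainP r σ L K (GBM r σ x W ((τ ω).toReal) ω) ≤
      (A * c) * expM W (-(2 * r / σ ^ 2) * σ) (τ ω).toReal ω +
      (B * (x / z)) * expM W σ (τ ω).toReal ω := by
    intro ω
    have h1 := hdom _ (GBM_pos (W := W) r σ hx (τ ω).toReal ω)
    have h2 := mul_le_mul_of_nonneg_left h1 (Real.exp_pos (-r * (τ ω).toReal)).le
    refine h2.trans_eq ?_
    rw [GBM_div, mul_add, mul_left_comm, mul_left_comm _ B, disc1, disc2 r hσ hxz]
    ring
  have := integral_mono_of_nonneg (μ := P.restrict {ω | τ ω ≠ ⊤})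
    (ae_of_all _ fun ω => mul_nonneg (Real.exp_pos (-r * (τ ω).toReal)).le
      (gain_nonneg (r := r) (σ := σ) (K := K) hL
        (GBM_pos (W := W) r σ hx (τ ω).toReal ω)))
    ((i2.const_mul (A * c)).add (i1.const_mul (B * (x / z)))) (ae_of_all _ hpt)
  refine this.trans ?_
  simp only [Pi.add_apply]
  rw [integral_add (i2.const_mul (A * c)) (i1.const_mul (B * (x / z))),
    integral_const_mul, integral_const_mul]
  have hAc : 0 ≤ A * c := by positivity
  have hBx : 0 ≤ B * (x / z) := by positivity
  nlinarith [mul_le_mul_of_nonneg_left l1 hBx, mul_le_mul_of_nonneg_left l2 hAc]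

lemma bern_neg {β s : ℝ} (hβ : 0 < β) (hs : 0 < s) : 1 - β * (s - 1) ≤ s ^ (-β) := by
  have h1 : Real.log s ≤ s - 1 := Real.log_le_sub_one_of_pos hs
  rw [Real.rpow_def_of_pos hs]
  have := Real.add_one_le_exp (Real.log s * -β)
  nlinarith

lemma bern_mul {β s : ℝ} (hβ : 0 < β) (hs : 0 < s) :
    s ^ (-β) * ((1 + β) * s - β) ≤ s := by
  have h := one_add_mul_self_le_rpow_one_add (s := s - 1) (by linarith) (p := 1 + β) (by linarith)
  have e : s ^ (-β) * s ^ (1 + β) = s := by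
    rw [← Real.rpow_add hs]; simp
  have hp : 0 < s ^ (-β) := Real.rpow_pos_of_pos hs _
  have h' : (1 + β) * s - β ≤ s ^ (1 + β) := by
    have e2 : 1 + (s - 1) = s := by ring
    rw [e2] at h; linarith
  calc _ ≤ s ^ (-β) * s ^ (1 + β) := mul_le_mul_of_nonneg_left h' hp.le
    _ = s := e

lemma dom1 {β K z y : ℝ} (hβ : 0 < β) (hK : 0 < K) (hz : 0 < z)
    (hzb : z ≤ β * K / (1 + β)) (hy : 0 < y) :
    max (K - y) 0 ≤ K / (1 + β) * (y / z) ^ (-β) + (β * K / (1 + β) - z) * (y / z) := by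
  have hs : 0 < y / z := div_pos hy hz
  have hyz : y = (y / z) * z := by field_simp
  set s := y / z
  have hp : 0 < s ^ (-β) := Real.rpow_pos_of_pos hs _
  have hk : 0 < K / (1 + β) := by positivity
  refine max_le ?_ ?_
  · have h := mul_le_mul_of_nonneg_left (bern_neg hβ hs) hk.le
    have e : K = K / (1 + β) + β * K / (1 + β) := by field_simp
    have e2 : K / (1 + β) * (1 - β * (s - 1)) + (β * K / (1 + β) - z) * s = K - s * z := by
      field_simp; ring
    rw [hyz]; linarith
  · have : 0 ≤ (β * K / (1 + β) - z) * s := mul_nonneg (by linarith) hs.le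
    have : 0 ≤ K / (1 + β) * s ^ (-β) := by positivity
    linarith

lemma dom2 {β K L x y : ℝ} (hβ : 0 < β) (hL : 0 < L) (hx : 0 < x)
    (hxK : 2 * x ≤ K) (hy : 0 < y) :
    max (K - y) 0 * (y / L) ^ (1 - β) ≤
      (x / L) ^ (1 - β) / (1 + β) * (β * (K - x) + x) * (y / x) ^ (-β) +
      (x / L) ^ (1 - β) / (1 + β) * (K - 2 * x) * (y / x) := by
  have hs : 0 < y / x := div_pos hy hx
  have hyz : y = (y / x) * x := by field_simp
  have e0 : (y / L) ^ (1 - β) = (x / L) ^ (1 - β) * ((y / x) * (y / x) ^ (-β)) := by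
    have : y / L = (x / L) * (y / x) := by field_simp
    rw [this, Real.mul_rpow (by positivity) (by positivity), sub_eq_add_neg 1 β,
      Real.rpow_add hs, Real.rpow_one]
  rw [e0]
  set s := y / x
  have hb := bern_mul hβ hs
  set q := s ^ (-β)
  have hq : 0 < q := Real.rpow_pos_of_pos hs _
  have hd : 0 < (x / L) ^ (1 - β) := Real.rpow_pos_of_pos (by positivity) _
  set d := (x / L) ^ (1 - β)
  have hpos : 0 ≤ (β * (K - x) + x) * q + (K - 2 * x) * s := by
    have h1 : 0 ≤ K - x := by linarith
    have h2 : 0 ≤ K - 2 * x := by linarith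
    positivity
  have main : (1 + β) * (max (K - y) 0 * (s * q)) ≤
      (β * (K - x) + x) * q + (K - 2 * x) * s := by
    rcases le_total (K - y) 0 with h | h
    · rw [max_eq_right h]; simpa using hpos
    · rw [max_eq_left h, hyz]
      have h1 := mul_le_mul_of_nonneg_left hb (show 0 ≤ K - 2 * x by linarith)
      have h2 : 0 ≤ (1 + β) * x * q * (1 - s) ^ 2 := by positivity
      nlinarith
  have e3 : d / (1 + β) * (β * (K - x) + x) * q + d / (1 + β) * (K - 2 * x) * s =
      d / (1 + β) * ((β * (K - x) + x) * q + (K - 2 * x) * s) := by ring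
  rw [e3]
  have := mul_le_mul_of_nonneg_left main (show 0 ≤ d / (1 + β) by positivity)
  refine le_trans (le_of_eq ?_) this
  field_simp

/-- extended hitting time -/
def hitE {Ω : Type} (r σ x b : ℝ) (W : ℝ → Ω → ℝ) (ω : Ω) : ENNReal :=
  open Classical in
  if ∃ t : ℝ, 0 ≤ t ∧ GBM r σ x W t ω ≤ b then ENNReal.ofReal (hitTime r σ x b W ω) else ⊤

lemma GBM_cont (hW : IsStdBM P F W) (r σ x : ℝ) (ω : Ω) :
    Continuous (fun t => GBM r σ x W t ω) := by
  have := hW.cont ω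
  unfold GBM
  fun_prop

lemma hit_nonneg (r σ x b : ℝ) (ω : Ω) : 0 ≤ hitTime r σ x b W ω :=
  Real.sInf_nonneg fun _ h => h.1

lemma hit_mem (hW : IsStdBM P F W) (r σ x b : ℝ) (ω : Ω)
    (h : ∃ t : ℝ, 0 ≤ t ∧ GBM r σ x W t ω ≤ b) :
    GBM r σ x W (hitTime r σ x b W ω) ω ≤ b := by
  have hc : IsClosed {t : ℝ | 0 ≤ t ∧ GBM r σ x W t ω ≤ b} :=
    (isClosed_le continuous_const continuous_id).inter
      (isClosed_le (GBM_cont hW r σ x ω) continuous_const)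
  exact (hc.csInf_mem h ⟨0, fun t ht => ht.1⟩).2

lemma hit_le {r σ x b : ℝ} {ω : Ω} {t : ℝ} (h0 : 0 ≤ t) (h : GBM r σ x W t ω ≤ b) :
    hitTime r σ x b W ω ≤ t :=
  csInf_le ⟨0, fun t ht => ht.1⟩ ⟨h0, h⟩

lemma hitE_le_iff (hW : IsStdBM P F W) (r σ x b : ℝ) (ω : Ω) {t : ℝ} (ht : 0 ≤ t) :
    hitE r σ x b W ω ≤ ENNReal.ofReal t ↔ ∃ s, 0 ≤ s ∧ s ≤ t ∧ GBM r σ x W s ω ≤ b := by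
  unfold hitE
  split_ifs with h
  · rw [ENNReal.ofReal_le_ofReal_iff ht]
    constructor
    · intro hle
      exact ⟨_, hit_nonneg _ _ _ _ _, hle, hit_mem hW r σ x b ω h⟩
    · rintro ⟨s, h0, hst, hs⟩
      exact (hit_le h0 hs).trans hst
  · constructor
    · intro h'; simp at h'
    · rintro ⟨s, h0, _, hs⟩
      exact absurd ⟨s, h0, hs⟩ h

lemma hitE_isST (hW : IsStdBM P F W) (r σ x b : ℝ) :
    IsStoppingTimeE F (hitE r σ x b W) := by
  intro t ht
  let cl : ℝ → ℝ := fun q => max 0 (min q 1) * t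
  have hcl : Continuous cl := by fun_prop
  have hcl0 : ∀ q, 0 ≤ cl q := fun q => mul_nonneg (le_max_left _ _) ht
  have hclt : ∀ q, cl q ≤ t := fun q => by
    have : max 0 (min q 1) ≤ (1:ℝ) := max_le zero_le_one (min_le_right _ _)
    exact mul_le_of_le_one_left ht this
  have e : {ω | hitE r σ x b W ω ≤ ENNReal.ofReal t} =
      ⋂ n : ℕ, ⋃ q : ℚ, {ω | GBM r σ x W (cl q) ω < b + 1 / ((n : ℝ) + 1)} := by
    ext ω
    simp only [Set.mem_ofPred_eq, Set.mem_iInter, Set.mem_iUnion, hitE_le_iff hW r σ x b ω ht]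
    constructor
    · rintro ⟨s, h0, hst, hs⟩ n
      have ho : IsOpen {u : ℝ | GBM r σ x W (cl u) ω < b + 1 / ((n : ℝ) + 1)} :=
        isOpen_lt ((GBM_cont hW r σ x ω).comp hcl) continuous_const
      have hne : {u : ℝ | GBM r σ x W (cl u) ω < b + 1 / ((n : ℝ) + 1)}.Nonempty := by
        refine ⟨s / t, ?_⟩
        have hs' : cl (s / t) = s := by
          rcases ht.eq_or_lt with h | h
          · have : s = 0 := by linarith
            simp [cl, ← h, this]
          · have h1 : s / t ≤ 1 := (div_le_one h).2 hst
            have h2 : 0 ≤ s / t := by positivity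
            simp only [cl]
            rw [min_eq_left h1, max_eq_right h2]
            field_simp
        simp only [Set.mem_ofPred_eq, hs']
        have : (0:ℝ) < 1 / ((n : ℝ) + 1) := by positivity
        linarith
      obtain ⟨q, hq⟩ := (Rat.denseRange_cast (𝕜 := ℝ)).exists_mem_open ho hne
      exact ⟨q, hq⟩
    · intro h
      obtain ⟨s, hs, hmin⟩ := (isCompact_Icc (a := (0:ℝ)) (b := t)).exists_isMinOn
        ⟨0, le_rfl, ht⟩ (GBM_cont hW r σ x ω).continuousOn
      refine ⟨s, hs.1, hs.2, ?_⟩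
      have hlim : Tendsto (fun n : ℕ => b + 1 / ((n : ℝ) + 1)) atTop (nhds (b + 0)) :=
        tendsto_one_div_add_atTop_nhds_zero_nat.const_add b
      rw [add_zero] at hlim
      refine ge_of_tendsto' hlim fun n => ?_
      obtain ⟨q, hq⟩ := h n
      exact (hmin ⟨hcl0 q, hclt q⟩ : GBM r σ x W s ω ≤ GBM r σ x W (cl q) ω).trans hq.le
  rw [e]
  refine MeasurableSet.iInter fun n => MeasurableSet.iUnion fun q => ?_
  have hm : Measurable[F t] (fun ω => GBM r σ x W (cl q) ω) := by
    have h1 : Measurable[F t] (W (cl q)) := (hW.adapted (cl q)).mono (F.mono (hclt q)) le_rfl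
    unfold GBM
    exact (Real.measurable_exp.comp ((h1.const_mul σ).const_add _)).const_mul x
  exact hm measurableSet_Iio

lemma hit_ge (hW : IsStdBM P F W) (r σ : ℝ) {x b : ℝ} (hbx : b ≤ x) (ω : Ω) {s : ℝ}
    (hs0 : 0 ≤ s) (hs : ENNReal.ofReal s ≤ hitE r σ x b W ω) : b ≤ GBM r σ x W s ω := by
  by_contra hlt
  push Not at hlt
  have h0 : GBM r σ x W 0 ω = x := by simp [GBM, hW.1]
  have := intermediate_value_Icc' hs0 (GBM_cont hW r σ x ω).continuousOn
  obtain ⟨u, hu, hub⟩ := this (show b ∈ Icc (GBM r σ x W s ω) (GBM r σ x W 0 ω) from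
    ⟨hlt.le, by rw [h0]; exact hbx⟩)
  have h1 := hs.trans ((hitE_le_iff hW r σ x b ω hu.1).2 ⟨u, hu.1, le_rfl, hub.le⟩)
  have h2 := (ENNReal.ofReal_le_ofReal_iff hu.1).1 h1
  have h3 : u = s := le_antisymm hu.2 h2
  simp only [h3] at hub
  linarith

lemma hitE_toReal {r σ x b : ℝ} {ω : Ω} (h : hitE r σ x b W ω ≠ ⊤) :
    (hitE r σ x b W ω).toReal = hitTime r σ x b W ω := by
  unfold hitE at *
  split_ifs at * with h'
  · rw [ENNReal.toReal_ofReal (hit_nonneg _ _ _ _ _)]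
  · exact absurd rfl h

lemma hit_eq (hW : IsStdBM P F W) (r σ : ℝ) {x b : ℝ} (hbx : b ≤ x) (ω : Ω)
    (h : hitE r σ x b W ω ≠ ⊤) : GBM r σ x W (hitTime r σ x b W ω) ω = b := by
  refine le_antisymm ?_ ?_
  · apply hit_mem hW
    by_contra h'
    exact h (by rw [hitE, if_neg h'])
  · apply hit_ge hW r σ hbx ω (hit_nonneg _ _ _ _ _)
    rw [← hitE_toReal h, ENNReal.ofReal_toReal h]

lemma hit_value (hW : IsStdBM P F W) {r σ x b : ℝ} (hr : 0 < r) (hσ : 0 < σ) (hb : 0 < b)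
    (hbx : b ≤ x) :
    ∫ ω in {ω | hitE r σ x b W ω ≠ ⊤}, Real.exp (-r * (hitE r σ x b W ω).toReal) ∂P =
      (x / b) ^ (-(2 * r / σ ^ 2)) := by
  have hx : 0 < x := hb.trans_le hbx
  have hxb : 0 < x / b := div_pos hx hb
  have hst := hitE_isST hW r σ x b
  set τ := hitE r σ x b W with hτ
  set β := 2 * r / σ ^ 2 with hβdef
  have hβ : 0 < β := by positivity
  have hg := fun n : ℕ => ost_bdd hW hst (-β * σ) (Nat.cast_nonneg n : (0:ℝ) ≤ n)
  have hS := meas_ne_top hst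
  let ρ : ℕ → Ω → ℝ := fun n ω => (min (τ ω) (ENNReal.ofReal n)).toReal
  let Y : ℕ → Ω → ℝ := fun n ω => (x / b) ^ (-β) * expM W (-β * σ) (ρ n ω) ω
  have hρ0 : ∀ n ω, 0 ≤ ρ n ω := fun n ω => ENNReal.toReal_nonneg
  have hYe : ∀ n ω, Y n ω = Real.exp (-r * ρ n ω) * (GBM r σ x W (ρ n ω) ω / b) ^ (-β) := by
    intro n ω
    rw [GBM_div, disc2 r hσ hxb]
  have hY0 : ∀ n ω, 0 ≤ Y n ω := fun n ω =>
    mul_nonneg (Real.rpow_nonneg hxb.le _) (expM_pos _ _ _).le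
  have hYle : ∀ n ω, Y n ω ≤ Real.exp (-r * ρ n ω) := by
    intro n ω
    rw [hYe]
    refine mul_le_of_le_one_right (Real.exp_pos _).le ?_
    apply Real.rpow_le_one_of_one_le_of_nonpos _ (by linarith)
    rw [one_le_div hb]
    apply hit_ge hW r σ hbx ω (hρ0 n ω)
    rw [ENNReal.ofReal_toReal (ne_top_of_le_ne_top ENNReal.ofReal_ne_top (min_le_right _ _))]
    exact min_le_left _ _
  have hYle1 : ∀ n ω, ‖Y n ω‖ ≤ 1 := fun n ω => by
    rw [Real.norm_of_nonneg (hY0 n ω)]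
    refine (hYle n ω).trans (Real.exp_le_one_iff.2 ?_)
    nlinarith [hρ0 n ω]
  have hlim : ∀ ω, Tendsto (fun n => Y n ω) atTop (nhds
      ({ω | τ ω ≠ ⊤}.indicator (fun ω => Real.exp (-r * (τ ω).toReal)) ω)) := by
    intro ω
    by_cases h : τ ω ≠ ⊤
    · rw [Set.indicator_of_mem (show ω ∈ {ω | τ ω ≠ ⊤} from h)]
      refine tendsto_const_nhds.congr' ?_
      filter_upwards [ev_min h] with n hn
      have hn' : ρ n ω = (τ ω).toReal := hn
      rw [hYe, hn', hτ, hitE_toReal h, hit_eq hW r σ hbx ω h, div_self hb.ne', Real.one_rpow,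
        mul_one]
    · rw [Set.indicator_of_notMem (show ω ∉ {ω | τ ω ≠ ⊤} from h)]
      push Not at h
      have hρn : ∀ n, ρ n ω = n := fun n => by simp [ρ, h]
      have h0 : Tendsto (fun n : ℕ => Real.exp (-r * n)) atTop (nhds 0) := by
        apply Real.tendsto_exp_atBot.comp
        exact (tendsto_natCast_atTop_atTop (R := ℝ)).const_mul_atTop_of_neg (by linarith)
      refine squeeze_zero (fun n => hY0 n ω) (fun n => ?_) h0
      have := hYle n ω
      rwa [hρn] at this
  have hD := tendsto_integral_of_dominated_convergence (μ := P) (fun _ => (1:ℝ))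
    (fun n => ((hg n).2.1.const_mul ((x / b) ^ (-β))).aestronglyMeasurable)
    (integrable_const _) (fun n => ae_of_all _ (hYle1 n)) (ae_of_all _ hlim)
  have hc : ∀ n : ℕ, ∫ ω, (x / b) ^ (-β) *
      expM W (-β * σ) (min (τ ω) (ENNReal.ofReal n)).toReal ω ∂P = (x / b) ^ (-β) := fun n => by
    rw [integral_const_mul, (hg n).2.2, mul_one]
  simp only [hc] at hD
  rw [← integral_indicator hS]
  exact tendsto_nhds_unique hD tendsto_const_nhds

lemma hit_ae (hW : IsStdBM P F W) {r σ x b : ℝ} (hσ : 0 < σ) (hb : 0 < b)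
    (hx : 0 < x) (hvol : 2 * r < σ ^ 2) : ∀ᵐ ω ∂P, hitE r σ x b W ω ≠ ⊤ := by
  have hS := (meas_ne_top (hitE_isST hW r σ x b)).compl
  set A : Set Ω := {ω | hitE r σ x b W ω ≠ ⊤}ᶜ with hA
  let p := 1 / 2 - r / σ ^ 2
  have hp : 0 < p := by
    have : r / σ ^ 2 < 1 / 2 := by rw [div_lt_iff₀ (by positivity)]; linarith
    simp only [p]; linarith
  have hps : σ ^ 2 / 2 - r = σ ^ 2 * p := by simp only [p]; field_simp
  let c0 := Real.exp (p * Real.log (b / x))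
  have hc0 : 0 < c0 := Real.exp_pos _
  have hpt : ∀ (n : ℕ), ∀ ω ∈ A,
      c0 * Real.exp ((σ * p) ^ 2 / 2 * n) ≤ expM W (σ * p) n ω := by
    intro n ω hω
    have h : ¬ ∃ t : ℝ, 0 ≤ t ∧ GBM r σ x W t ω ≤ b := by
      intro h
      apply hω
      simp [hitE, h]
    push Not at h
    have h1 := h n (Nat.cast_nonneg n)
    unfold GBM at h1
    have h2 : Real.log (b / x) < (r - σ ^ 2 / 2) * n + σ * W n ω := by
      rw [Real.log_lt_iff_lt_exp (by positivity), div_lt_iff₀ hx]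
      linarith
    simp only [c0, expM, ← Real.exp_add]
    apply Real.exp_le_exp.2
    have h3 := mul_le_mul_of_nonneg_left h2.le hp.le
    have h4 : r - σ ^ 2 / 2 = - (σ ^ 2 * p) := by linarith
    rw [h4] at h3
    nlinarith
  have hm : ∀ n : ℕ, P.real A * c0 ≤ Real.exp (-((σ * p) ^ 2 / 2) * n) := by
    intro n
    have hi := expM_int hW (σ * p) (Nat.cast_nonneg n : (0:ℝ) ≤ n)
    have : ∫ ω, A.indicator (fun _ => c0 * Real.exp ((σ * p) ^ 2 / 2 * n)) ω ∂P ≤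
        ∫ ω, expM W (σ * p) n ω ∂P := by
      refine integral_mono ((integrable_const _).indicator hS) hi.1 fun ω => ?_
      by_cases h : ω ∈ A
      · rw [Set.indicator_of_mem h]; exact hpt n ω h
      · rw [Set.indicator_of_notMem h]; exact (expM_pos _ _ _).le
    rw [integral_indicator_const _ hS, hi.2, smul_eq_mul] at this
    have e : Real.exp (-((σ * p) ^ 2 / 2) * n) = (Real.exp ((σ * p) ^ 2 / 2 * n))⁻¹ := by
      rw [← Real.exp_neg]; ring_nf
    rw [e, ← one_div, le_div_iff₀ (Real.exp_pos _)]
    linarith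
  have h0 : Tendsto (fun n : ℕ => Real.exp (-((σ * p) ^ 2 / 2) * n)) atTop (nhds 0) := by
    apply Real.tendsto_exp_atBot.comp
    refine (tendsto_natCast_atTop_atTop (R := ℝ)).const_mul_atTop_of_neg ?_
    have : 0 < (σ * p) ^ 2 := by positivity
    linarith
  have h1 : P.real A * c0 ≤ 0 := ge_of_tendsto' h0 hm
  have h2 : P.real A = 0 := by
    have := measureReal_nonneg (μ := P) (s := A)
    nlinarith
  rw [ae_iff]
  have : P A = 0 := by
    rwa [measureReal_eq_zero_iff] at h2
  convert this using 2
  ext ω; simp [hA]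

lemma value_eq {r σ L K x U : ℝ}
    (hU : ∀ τ : Ω → ENNReal, IsStoppingTimeE F τ →
      ∫ ω in {ω | τ ω ≠ ⊤}, Real.exp (-r * (τ ω).toReal) *
      gainP r σ L K (GBM r σ x W ((τ ω).toReal) ω) ∂P ≤ U)
    {τ₀ : Ω → ENNReal} (h₀ : IsStoppingTimeE F τ₀)
    (he : ∫ ω in {ω | τ₀ ω ≠ ⊤}, Real.exp (-r * (τ₀ ω).toReal) *
      gainP r σ L K (GBM r σ x W ((τ₀ ω).toReal) ω) ∂P = U) :
    valueP P F W r σ L K x = U := by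
  unfold valueP
  haveI : Nonempty {τ : Ω → ENNReal // IsStoppingTimeE F τ} := ⟨⟨τ₀, h₀⟩⟩
  refine le_antisymm (ciSup_le fun τ => hU τ.1 τ.2) ?_
  have hb : BddAbove (Set.range fun τ : {τ : Ω → ENNReal // IsStoppingTimeE F τ} =>
      ∫ ω in {ω | τ.1 ω ≠ ⊤}, Real.exp (-r * (τ.1 ω).toReal) *
      gainP r σ L K (GBM r σ x W ((τ.1 ω).toReal) ω) ∂P) := by
    refine ⟨U, ?_⟩
    rintro _ ⟨τ, rfl⟩
    exact hU τ.1 τ.2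
  exact he.symm.le.trans (le_ciSup hb ⟨τ₀, h₀⟩)

end helpers

/-- Assume `2r < σ²` and `2rK > L(σ² + 2r)`, and set
`b = 2rK/(2r + σ²)` (so that `b > L`). Then the perpetual value function is given
explicitly by `V(x) = G(x)` for `x ∈ (0, b)` and
`V(x) = (K − b)·b^{2r/σ²}·x^{−2r/σ²}` for `x ∈ [b, ∞)`; moreover the stopping time
`τ_b = inf{t ≥ 0 : X^x_t ≤ b}` is optimal, i.e. `V(x) = E[e^{−r·τ_b} G(X^x_{τ_b})]`
for every `x > 0`. -/
theorem stmt_5 {Ω : Type} [mΩ : MeasurableSpace Ω] (P : Measure Ω) [IsProbabilityMeasure P]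
    (F : Filtration ℝ mΩ) (W : ℝ → Ω → ℝ) (hW : IsStdBM P F W)
    (r σ L K : ℝ) (hr : 0 < r) (hσ : 0 < σ) (hL : 0 < L) (hLK : L < K)
    (hvol : 2 * r < σ ^ 2) (hbL : 2 * r * K > L * (σ ^ 2 + 2 * r)) :
    let b : ℝ := 2 * r * K / (2 * r + σ ^ 2)
    (∀ x ∈ Ioo (0 : ℝ) b, valueP P F W r σ L K x = gainP r σ L K x) ∧
    (∀ x ∈ Ici b,
      valueP P F W r σ L K x =
        (K - b) * b ^ (2 * r / σ ^ 2) * x ^ (-(2 * r) / σ ^ 2)) ∧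
    (∀ x : ℝ, 0 < x →
      valueP P F W r σ L K x =
        ∫ ω, Real.exp (-r * hitTime r σ x b W ω) *
          gainP r σ L K (GBM r σ x W (hitTime r σ x b W ω) ω) ∂P) := by
  intro b
  have hK : 0 < K := hL.trans hLK
  set β := 2 * r / σ ^ 2 with hβdef
  have hβ : 0 < β := by positivity
  have hβ1 : β < 1 := by rw [hβdef, div_lt_one (by positivity)]; exact hvol
  have hbβ : b = β * K / (1 + β) := by
    simp only [b, hβdef]; field_simp; ring
  have hb : 0 < b := by rw [hbβ]; positivity
  have hbL' : L < b := by
    simp only [b]; rw [lt_div_iff₀ (by positivity)]; linarith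
  have hb2 : 2 * b ≤ K := by
    rw [hbβ, mul_div_assoc', div_le_iff₀ (by positivity)]; nlinarith
  have hKb : K - b = K / (1 + β) := by rw [hbβ]; field_simp; ring
  have part1 : ∀ x ∈ Ioo (0 : ℝ) b, valueP P F W r σ L K x = gainP r σ L K x := by
    rintro x ⟨hx, hxb⟩
    have h0 : IsStoppingTimeE F (fun _ : Ω => (0 : ENNReal)) := fun t _ => by simp
    refine value_eq (P := P) (F := F) (W := W) (τ₀ := fun _ => 0) ?_ h0 ?_
    · intro τ hτ
      rcases le_total L x with h | h
      · have := upper hW (r := r) (K := K) (x := x) (z := x) (A := K / (1 + β))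
          (B := β * K / (1 + β) - x) hσ hL hx hx (by positivity)
          (by rw [← hbβ]; linarith)
          (fun y hy => gain_le1.trans (dom1 hβ hK hx (by rw [← hbβ]; exact hxb.le) hy)) hτ
        refine this.trans_eq ?_
        rw [gain_eq1 hL h (by linarith) hβ1, div_self hx.ne', Real.one_rpow]
        field_simp; ring
      · have hxK : 0 ≤ K - 2 * x := by linarith
        have hxK' : 0 ≤ K - x := by linarith
        have hd : 0 < (x / L) ^ (1 - β) := Real.rpow_pos_of_pos (by positivity) _
        have := upper hW (r := r) (K := K) (x := x) (z := x)
          (A := (x / L) ^ (1 - β) / (1 + β) * (β * (K - x) + x))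
          (B := (x / L) ^ (1 - β) / (1 + β) * (K - 2 * x)) hσ hL hx hx (by positivity)
          (by positivity)
          (fun y hy => (gain_le2 hL hy).trans (dom2 hβ hL hx (by linarith) hy)) hτ
        refine this.trans_eq ?_
        rw [gain_eq2 hL hx h (by linarith) hβ1, div_self hx.ne', Real.one_rpow]
        rw [← hβdef]
        field_simp; ring
    · simp [GBM, hW.1]
  have hgb : gainP r σ L K b = K - b := gain_eq1 hL hbL'.le (by linarith) hβ1
  have hexp : ∀ x, b ≤ x → ∫ ω in {ω | hitE r σ x b W ω ≠ ⊤},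
      Real.exp (-r * (hitE r σ x b W ω).toReal) *
      gainP r σ L K (GBM r σ x W ((hitE r σ x b W ω).toReal) ω) ∂P =
      (K - b) * (x / b) ^ (-β) := by
    intro x hx
    have hS := meas_ne_top (hitE_isST hW r σ x b)
    rw [setIntegral_congr_fun (g := fun ω =>
      Real.exp (-r * (hitE r σ x b W ω).toReal) * (K - b)) hS]
    · rw [integral_mul_const, hit_value hW hr hσ hb hx, mul_comm]
    · intro ω hω
      have hω' : hitE r σ x b W ω ≠ ⊤ := hω
      simp only
      rw [hitE_toReal hω', hit_eq hW r σ hx ω hω', hgb]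
  have part2 : ∀ x, b ≤ x → valueP P F W r σ L K x = (K - b) * (x / b) ^ (-β) := by
    intro x hx
    refine value_eq ?_ (hitE_isST hW r σ x b) (hexp x hx)
    intro τ hτ
    have := upper hW (r := r) (K := K) (x := x) (z := b) (A := K / (1 + β))
      (B := β * K / (1 + β) - b) hσ hL (hb.trans_le hx) hb (by positivity)
      (by rw [← hbβ]; linarith)
      (fun y hy => gain_le1.trans (dom1 hβ hK hb hbβ.le hy)) hτ
    refine this.trans_eq ?_
    rw [← hbβ, hKb, sub_self, zero_mul, add_zero]
  refine ⟨part1, ?_, ?_⟩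
  · intro x hx
    have hx' : b ≤ x := hx
    have hx0 : 0 < x := hb.trans_le hx'
    rw [part2 x hx', Real.div_rpow hx0.le hb.le, Real.rpow_neg hb.le, div_inv_eq_mul,
      neg_div, ← hβdef]
    ring
  · intro x hx
    rcases lt_or_ge x b with h | h
    · rw [part1 x ⟨hx, h⟩]
      have h0 : ∀ ω, GBM r σ x W 0 ω = x := fun ω => by simp [GBM, hW.1]
      have ht : ∀ ω, hitTime r σ x b W ω = 0 := fun ω =>
        le_antisymm (hit_le le_rfl (by rw [h0]; exact h.le)) (hit_nonneg _ _ _ _ _)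
      simp [ht, h0]
    · rw [part2 x h, ← hexp x h]
      have hae := hit_ae hW (r := r) hσ hb hx hvol
      rw [setIntegral_eq_integral_of_ae_compl_eq_zero]
      · refine integral_congr_ae ?_
        filter_upwards [hae] with ω hω
        rw [hitE_toReal hω]
      · filter_upwards [hae] with ω hω hn
        exact absurd hω hn

end
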